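/- arXiv:0908.3274 — 4 statements merged into one kernel-verified Lean document; each statement's English description precedes it below -/
import Mathlib

section
/- Let Σ ⊆ ℂ be open, let f : Σ → su(2) be a smooth conformal immersion with conformal factor e^u, and let F : Σ → SU(2) be a smooth frame satisfying F e₁ F⁻¹ = f_x/|f_x| and F e₂ F⁻¹ = f_y/|f_y|. Set N = F e₃ F⁻¹, Q = ⟨N, f_{zz}⟩ and H = (1/8) e^{-2u} ⟨f_{xx} + f_{yy}, N⟩. Then the connection coefficients are U := F⁻¹ F_z = (1/2)[[u_z, -2H e^u],[Q e^{-u}, -u_z]] and V := F⁻¹ F_{z̄} = (1/2)[[-u_{z̄}, -Q̄ e^{-u}],[2H e^u, u_{z̄}]]. -/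
open Matrix Complex

noncomputable section

attribute [local instance] Matrix.linftyOpNormedAddCommGroup Matrix.linftyOpNormedSpace
  Matrix.linftyOpNormedRing Matrix.linftyOpNormedAlgebra

/-- The space of 2×2 complex matrices. -/
abbrev M2 : Type := Matrix (Fin 2) (Fin 2) ℂ

/-- Basis vector `e₁` of su(2). -/
def e1 : M2 := !![0, -Complex.I; -Complex.I, 0]

/-- Basis vector `e₂` of su(2). -/
def e2 : M2 := !![0, 1; -1, 0]

/-- Basis vector `e₃` of su(2). -/
def e3 : M2 := !![Complex.I, 0; 0, -Complex.I]

/-- The inner product `⟨X,Y⟩ = -(1/2) tr (XY)` identifying su(2) with E³. -/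
def ip (X Y : M2) : ℂ := -(1/2 : ℂ) * (X * Y).trace

/-- Partial derivative in the `x`-direction. -/
def px (f : ℂ → M2) (z : ℂ) : M2 := fderiv ℝ f z 1

/-- Partial derivative in the `y`-direction. -/
def py (f : ℂ → M2) (z : ℂ) : M2 := fderiv ℝ f z Complex.I

/-- Wirtinger derivative `∂_z = (1/2)(∂_x - i ∂_y)`. -/
def dz (f : ℂ → M2) (z : ℂ) : M2 := (2:ℂ)⁻¹ • (px f z - Complex.I • py f z)

/-- Wirtinger derivative `∂_z̄ = (1/2)(∂_x + i ∂_y)`. -/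
def dzb (f : ℂ → M2) (z : ℂ) : M2 := (2:ℂ)⁻¹ • (px f z + Complex.I • py f z)

/-- `x`-derivative of a real-valued function on ℂ. -/
def pxR (u : ℂ → ℝ) (z : ℂ) : ℝ := fderiv ℝ u z 1

/-- `y`-derivative of a real-valued function on ℂ. -/
def pyR (u : ℂ → ℝ) (z : ℂ) : ℝ := fderiv ℝ u z Complex.I

/-- Wirtinger derivative `u_z` of a real-valued function. -/
def dzR (u : ℂ → ℝ) (z : ℂ) : ℂ := (2:ℂ)⁻¹ * ((pxR u z : ℂ) - Complex.I * (pyR u z : ℂ))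

/-- Wirtinger derivative `u_z̄` of a real-valued function. -/
def dzbR (u : ℂ → ℝ) (z : ℂ) : ℂ := (2:ℂ)⁻¹ * ((pxR u z : ℂ) + Complex.I * (pyR u z : ℂ))

/-- `x`-derivative of a complex-valued function on ℂ. -/
def pxC (q : ℂ → ℂ) (z : ℂ) : ℂ := fderiv ℝ q z 1

/-- `y`-derivative of a complex-valued function on ℂ. -/
def pyC (q : ℂ → ℂ) (z : ℂ) : ℂ := fderiv ℝ q z Complex.I

/-- Wirtinger derivative `∂_z` of a complex-valued function. -/
def dzC (q : ℂ → ℂ) (z : ℂ) : ℂ := (2:ℂ)⁻¹ * (pxC q z - Complex.I * pyC q z)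

/-- Wirtinger derivative `∂_z̄` of a complex-valued function. -/
def dzbC (q : ℂ → ℂ) (z : ℂ) : ℂ := (2:ℂ)⁻¹ * (pxC q z + Complex.I * pyC q z)


section Generic
variable {R : Type*} [NormedRing R] [NormedAlgebra ℝ R]

lemma skewG (s : R →L[ℝ] R) {F : ℂ → R} {z : ℂ} (hF : DifferentiableAt ℝ F z)
    (hc : (fun w => s (F w) * F w) =ᶠ[nhds z] fun _ => (1:R)) (v : ℂ) :
    s (F z) * fderiv ℝ F z v + s (fderiv ℝ F z v) * F z = 0 := by
  have h := hF.hasFDerivAt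
  have hd := HasFDerivAt.mul' (s.hasFDerivAt.comp z h) h
  have h1 := (hc.hasFDerivAt_iff.1 hd).unique (hasFDerivAt_const (1:R) z)
  have h2 := DFunLike.congr_fun h1 v
  simpa using h2

lemma frameG (s : R →L[ℝ] R) {F g : ℂ → R} {u : ℂ → ℝ} {z : ℂ} (hF : DifferentiableAt ℝ F z)
    (hu : DifferentiableAt ℝ u z) (e : R)
    (hc : g =ᶠ[nhds z] fun w => (2 * Real.exp (u w)) • (F w * e * s (F w))) (v : ℂ) :
    fderiv ℝ g z v = (2 * Real.exp (u z)) • (fderiv ℝ u z v • (F z * e * s (F z)) +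
      fderiv ℝ F z v * e * s (F z) + F z * e * s (fderiv ℝ F z v)) := by
  have h := hF.hasFDerivAt
  have hd := HasFDerivAt.smul ((hu.hasFDerivAt.exp).const_mul 2)
    (HasFDerivAt.mul' (h.mul_const' e) (s.hasFDerivAt.comp z h))
  rw [(hc.hasFDerivAt_iff.2 hd).fderiv]
  simp [mul_assoc, smul_smul]
  module

lemma symmG {E : Type*} [NormedAddCommGroup E] [NormedSpace ℝ E] {f : ℂ → E} {z : ℂ}
    (hc : ContDiffAt ℝ (⊤ : ℕ∞) f z) :
    DifferentiableAt ℝ (fun w => fderiv ℝ f w 1) z ∧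
    DifferentiableAt ℝ (fun w => fderiv ℝ f w I) z ∧
    fderiv ℝ (fun w => fderiv ℝ f w I) z 1 = fderiv ℝ (fun w => fderiv ℝ f w 1) z I := by
  have hs : IsSymmSndFDerivAt ℝ f z := hc.isSymmSndFDerivAt (by
    simp only [minSmoothness_of_isRCLikeNormedField]; exact WithTop.coe_le_coe.2 (le_top : (2:ℕ∞) ≤ ⊤))
  have hd : DifferentiableAt ℝ (fderiv ℝ f) z := by
    have : ContDiffAt ℝ 1 (fderiv ℝ f) z := hc.fderiv_right (by norm_cast)
    exact this.differentiableAt (by simp)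
  have h : ∀ v, HasFDerivAt (fun w => fderiv ℝ f w v) _ z := fun v =>
    hd.hasFDerivAt.clm_apply (hasFDerivAt_const v z)
  refine ⟨(h 1).differentiableAt, (h I).differentiableAt, ?_⟩
  rw [(h 1).fderiv, (h I).fderiv]
  simpa using hs 1 I

lemma wirtG {E : Type*} [NormedAddCommGroup E] [NormedSpace ℝ E] (J : E →L[ℝ] E) {a b : ℂ → E}
    {z : ℂ} (ha : DifferentiableAt ℝ a z) (hb : DifferentiableAt ℝ b z) (v : ℂ) :
    fderiv ℝ (fun w => J (a w - b w)) z v = J (fderiv ℝ a z v - fderiv ℝ b z v) := by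
  have h := J.hasFDerivAt.comp z (ha.hasFDerivAt.sub hb.hasFDerivAt)
  have h2 : HasFDerivAt (fun w => J (a w - b w)) _ z := h
  rw [h2.fderiv]
  simp

lemma linG {E E' : Type*} [NormedAddCommGroup E] [NormedSpace ℝ E] [NormedAddCommGroup E']
    [NormedSpace ℝ E'] (J : E →L[ℝ] E') {a : ℂ → E}
    {z : ℂ} (ha : DifferentiableAt ℝ a z) (v : ℂ) :
    DifferentiableAt ℝ (fun w => J (a w)) z ∧
      fderiv ℝ (fun w => J (a w)) z v = J (fderiv ℝ a z v) := by
  have h2 : HasFDerivAt (fun w => J (a w)) _ z := J.hasFDerivAt.comp z ha.hasFDerivAt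
  exact ⟨h2.differentiableAt, by rw [h2.fderiv]; simp⟩

lemma detG {a b c d : ℂ → ℂ} {z : ℂ} (ha : DifferentiableAt ℝ a z) (hb : DifferentiableAt ℝ b z)
    (hcc : DifferentiableAt ℝ c z) (hd : DifferentiableAt ℝ d z)
    (hc : (fun w => a w * d w - b w * c w) =ᶠ[nhds z] fun _ => (1:ℂ)) (v : ℂ) :
    a z * fderiv ℝ d z v + d z * fderiv ℝ a z v
      - (b z * fderiv ℝ c z v + c z * fderiv ℝ b z v) = 0 := by
  have h1 := ((ha.hasFDerivAt.mul hd.hasFDerivAt).sub (hb.hasFDerivAt.mul hcc.hasFDerivAt))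
  have h2 := (hc.hasFDerivAt_iff.1 h1).unique (hasFDerivAt_const (1:ℂ) z)
  have h2 := DFunLike.congr_fun h2 v
  simpa using h2

lemma detL {E : Type*} [NormedAddCommGroup E] [NormedSpace ℝ E] (a b c d : E →L[ℝ] ℂ)
    {F : ℂ → E} {z : ℂ} (hF : DifferentiableAt ℝ F z)
    (hc : (fun w => a (F w) * d (F w) - b (F w) * c (F w)) =ᶠ[nhds z] fun _ => (1:ℂ)) (v : ℂ) :
    a (F z) * d (fderiv ℝ F z v) + d (F z) * a (fderiv ℝ F z v)
      - (b (F z) * c (fderiv ℝ F z v) + c (F z) * b (fderiv ℝ F z v)) = 0 := by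
  have h := detG (linG a hF v).1 (linG b hF v).1 (linG c hF v).1 (linG d hF v).1 hc v
  rwa [(linG a hF v).2, (linG b hF v).2, (linG c hF v).2, (linG d hF v).2] at h

end Generic

/-- Conjugate transpose as a real-linear continuous map. -/
def starM : M2 →L[ℝ] M2 :=
  LinearMap.toContinuousLinearMap (E := M2)
    { toFun := fun A => Aᴴ, map_add' := fun A B => Matrix.conjTranspose_add A B,
      map_smul' := fun c A => by ext i j; simp [Matrix.conjTranspose_apply] }

lemma starM_apply (A : M2) : starM A = Aᴴ := rfl

/-- Matrix entry as a real-linear continuous map. -/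
def entM (i j : Fin 2) : M2 →L[ℝ] ℂ :=
  LinearMap.toContinuousLinearMap (E := M2) (Matrix.entryLinearMap ℝ ℂ i j)

lemma entM_apply (i j : Fin 2) (A : M2) : entM i j A = A i j := rfl

/-- Complex scaling as a real-linear continuous map. -/
def sclM (c : ℂ) : M2 →L[ℝ] M2 :=
  LinearMap.toContinuousLinearMap (E := M2)
    { toFun := fun A => c • A, map_add' := fun A B => smul_add c A B,
      map_smul' := fun r A => smul_comm c r A }

lemma sclM_apply (c : ℂ) (A : M2) : sclM c A = c • A := rfl

lemma trace_zero {S : Set ℂ} (hS : IsOpen S) {F : ℂ → M2} {z : ℂ} (hz : z ∈ S)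
    (hF : DifferentiableAt ℝ F z) (hU : ∀ z ∈ S, (F z)ᴴ * F z = 1 ∧ (F z).det = 1) (v : ℂ) :
    ((F z)ᴴ * fderiv ℝ F z v).trace = 0 := by
  have hc : (fun w => entM 0 0 (F w) * entM 1 1 (F w) - entM 0 1 (F w) * entM 1 0 (F w))
      =ᶠ[nhds z] fun _ => (1:ℂ) := by
    filter_upwards [hS.mem_nhds hz] with w hw
    rw [← (hU w hw).2, Matrix.det_fin_two]; rfl
  have h1 : F z 0 0 * fderiv ℝ F z v 1 1 + F z 1 1 * fderiv ℝ F z v 0 0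
      - (F z 0 1 * fderiv ℝ F z v 1 0 + F z 1 0 * fderiv ℝ F z v 0 1) = 0 :=
    detL (entM 0 0) (entM 0 1) (entM 1 0) (entM 1 1) hF hc v
  have hinv : (F z)ᴴ = (F z).adjugate := by
    have h := (hU z hz).1
    have : (F z)⁻¹ = (F z)ᴴ := Matrix.inv_eq_left_inv h
    rw [← this, Matrix.inv_def, (hU z hz).2]; simp
  rw [hinv, Matrix.adjugate_fin_two, Matrix.trace_fin_two, Matrix.mul_apply, Matrix.mul_apply,
    Fin.sum_univ_two, Fin.sum_univ_two]
  simp only [Matrix.of_apply, Matrix.cons_val', Matrix.cons_val_zero, Matrix.cons_val_one,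
    Matrix.cons_val_fin_one]
  linear_combination h1

lemma skew {S : Set ℂ} (hS : IsOpen S) {F : ℂ → M2} {z : ℂ} (hz : z ∈ S)
    (hF : DifferentiableAt ℝ F z) (hU : ∀ z ∈ S, (F z)ᴴ * F z = 1 ∧ (F z).det = 1) (v : ℂ) :
    ((F z)ᴴ * fderiv ℝ F z v)ᴴ = - ((F z)ᴴ * fderiv ℝ F z v) := by
  have h2 : (F z)ᴴ * fderiv ℝ F z v + (fderiv ℝ F z v)ᴴ * F z = 0 := by
    refine skewG starM hF ?_ v
    filter_upwards [hS.mem_nhds hz] with w hw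
    exact (hU w hw).1
  rw [Matrix.conjTranspose_mul, Matrix.conjTranspose_conjTranspose, eq_neg_iff_add_eq_zero,
    add_comm]
  exact h2

lemma alg_frame (F X e : M2) (c : ℂ) (r : ℂ) (hl : Fᴴ * F = 1) (sk : (Fᴴ * X)ᴴ = -(Fᴴ * X)) :
    c • (r • (F * e * Fᴴ) + X * e * Fᴴ + F * e * Xᴴ) =
    c • (F * (r • e + Fᴴ * X * e - e * (Fᴴ * X)) * Fᴴ) := by
  have hr : F * Fᴴ = 1 := mul_eq_one_comm.1 hl
  have hxs : Xᴴ = - (Fᴴ * X * Fᴴ) := by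
    rw [← neg_mul, ← sk, Matrix.conjTranspose_mul, Matrix.conjTranspose_conjTranspose, mul_assoc,
      hr, mul_one]
  rw [hxs]
  have h1 : F * (Fᴴ * X * e) * Fᴴ = X * e * Fᴴ := by
    simp only [← mul_assoc]; rw [hr, one_mul]
  rw [mul_sub, mul_add, sub_mul, add_mul, h1]
  simp only [mul_neg, Matrix.mul_smul, Matrix.smul_mul, mul_assoc, sub_eq_add_neg]

lemma frame_deriv {S : Set ℂ} (hS : IsOpen S) {F g : ℂ → M2} {u : ℂ → ℝ} {z : ℂ} (hz : z ∈ S)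
    (hF : DifferentiableAt ℝ F z) (hu : DifferentiableAt ℝ u z)
    (hU : ∀ z ∈ S, (F z)ᴴ * F z = 1 ∧ (F z).det = 1) (e : M2)
    (hg : ∀ z ∈ S, F z * e * (F z)⁻¹ = (((2 * Real.exp (u z))⁻¹ : ℝ) : ℂ) • g z) (v : ℂ) :
    fderiv ℝ g z v = ((2 * Real.exp (u z) : ℝ) : ℂ) • (F z *
      (((fderiv ℝ u z v : ℝ) : ℂ) • e + (F z)ᴴ * fderiv ℝ F z v * e
        - e * ((F z)ᴴ * fderiv ℝ F z v)) * (F z)ᴴ) := by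
  rw [← alg_frame _ _ _ _ _ (hU z hz).1 (skew hS hz hF hU v)]
  refine frameG starM hF hu e ?_ v
  filter_upwards [hS.mem_nhds hz] with w hw
  have h := hg w hw
  rw [Matrix.inv_eq_left_inv (hU w hw).1] at h
  have h2 : g w = ((2 * Real.exp (u w) : ℝ) : ℂ) • (F w * e * (F w)ᴴ) := by
    rw [h, smul_smul, ← Complex.ofReal_mul, mul_inv_cancel₀ (by positivity)]
    simp
  exact h2

lemma ip_conj {F X Y : M2} (h : Fᴴ * F = 1) : ip (F * X * Fᴴ) (F * Y * Fᴴ) = ip X Y := by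
  unfold ip
  have : F * X * Fᴴ * (F * Y * Fᴴ) = F * (X * Y * Fᴴ) := by
    rw [show F * X * Fᴴ * (F * Y * Fᴴ) = F * X * (Fᴴ * F) * Y * Fᴴ by simp only [mul_assoc], h]
    simp only [mul_assoc, mul_one]
  rw [this, Matrix.trace_mul_comm, mul_assoc, h, mul_one]

lemma dzdz {f : ℂ → M2} {z : ℂ} (hx : DifferentiableAt ℝ (px f) z)
    (hy : DifferentiableAt ℝ (py f) z) (v : ℂ) :
    fderiv ℝ (dz f) z v = (2:ℂ)⁻¹ • (fderiv ℝ (px f) z v - I • fderiv ℝ (py f) z v) := by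
  have h := linG (sclM I) hy v
  have h2 := wirtG (sclM (2:ℂ)⁻¹) hx h.1 v
  rw [h.2] at h2
  exact h2

/-- The derivative coefficient in the moving frame. -/
def XX (r : ℝ) (A e : M2) : M2 := ((r : ℝ) : ℂ) • e + A * e - e * A

lemma XX1 (r : ℝ) (A : M2) : XX r A e1 =
    !![-I * (A 0 1 - A 1 0), -I * (r + A 0 0 - A 1 1);
       -I * (r + A 1 1 - A 0 0), -I * (A 1 0 - A 0 1)] := by
  unfold XX e1
  conv_lhs => rw [Matrix.eta_fin_two A]
  ext i j
  fin_cases i <;> fin_cases j <;> simp <;> ring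

lemma XX2 (r : ℝ) (A : M2) : XX r A e2 =
    !![-A 0 1 - A 1 0, r + A 0 0 - A 1 1;
       -r - A 1 1 + A 0 0, A 1 0 + A 0 1] := by
  unfold XX e2
  conv_lhs => rw [Matrix.eta_fin_two A]
  ext i j
  fin_cases i <;> fin_cases j <;> simp <;> ring

lemma ipl (M : M2) : ip e3 M = -(1/2) * (I * M 0 0 - I * M 1 1) := by
  unfold ip e3
  rw [Matrix.eta_fin_two M, Matrix.trace_fin_two]
  simp; ring

lemma ipr (M : M2) : ip M e3 = -(1/2) * (I * M 0 0 - I * M 1 1) := by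
  rw [← ipl]; unfold ip; rw [Matrix.trace_mul_comm]

lemma final_alg (A B : M2) (p q : ℝ) (t : ℂ) (ht : t ≠ 0) (hts : (starRingEnd ℂ) t = t)
    (Q H : ℂ) (hA : Aᴴ = -A) (hB : Bᴴ = -B)
    (tA : A.trace = 0) (tB : B.trace = 0) (hs : XX p A e2 = XX q B e1)
    (hQ : Q = (t / 2) * ip e3 (XX p A e1 - I • XX p A e2 - I • (XX q B e1 - I • XX q B e2)))
    (hH : H = (t / (4 * t ^ 2)) * ip (XX p A e1 + XX q B e2) e3) :
    (2:ℂ)⁻¹ • (A - I • B) = (2:ℂ)⁻¹ •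
        !![(2:ℂ)⁻¹ * ((p : ℂ) - I * (q : ℂ)), -2 * H * t;
           Q * t⁻¹, -((2:ℂ)⁻¹ * ((p : ℂ) - I * (q : ℂ)))] ∧
    (2:ℂ)⁻¹ • (A + I • B) = (2:ℂ)⁻¹ •
        !![-((2:ℂ)⁻¹ * ((p : ℂ) + I * (q : ℂ))), -((starRingEnd ℂ) Q) * t⁻¹;
           2 * H * t, (2:ℂ)⁻¹ * ((p : ℂ) + I * (q : ℂ))] := by
  have I2 : I * I = -1 := Complex.I_mul_I
  have hAe := fun i j => congrFun (congrFun hA i) j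
  have hBe := fun i j => congrFun (congrFun hB i) j
  have hse := fun i j => congrFun (congrFun hs i) j
  have a1 := hAe 0 1
  have b1 := hBe 0 1
  have s00 := hse 0 0
  have s01 := hse 0 1
  have s10 := hse 1 0
  simp only [Matrix.conjTranspose_apply, Matrix.neg_apply, ← starRingEnd_apply] at a1 b1
  rw [Matrix.trace_fin_two] at tA tB
  simp [XX1, XX2] at s00 s01 s10
  rw [ipl, XX1, XX2, XX1, XX2] at hQ
  rw [ipr, XX1, XX2] at hH
  simp at hQ hH
  have ha : A 0 0 = -I * q / 2 := by linear_combination (1/4) * (s01 + s10) + (1/2) * tA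
  have hb : B 0 0 = I * p / 2 := by
    linear_combination -(I/4) * (s01 - s10) + (1/2) * tB + (1/2) * (B 0 0 - B 1 1) * I2
  have a2 : (starRingEnd ℂ) (A 0 1) = - A 1 0 := by rw [← neg_eq_iff_eq_neg.2 a1]; simp
  have b2 : (starRingEnd ℂ) (B 0 1) = - B 1 0 := by rw [← neg_eq_iff_eq_neg.2 b1]; simp
  have hQt : Q * t⁻¹ = A 1 0 - I * B 1 0 := by
    rw [hQ]; field_simp
    linear_combination (4 * (I * B 1 0 - A 1 0)) * I2
  have hQc : (starRingEnd ℂ) Q * t⁻¹ = - A 0 1 - I * B 0 1 := by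
    have := congrArg (starRingEnd ℂ) hQt
    rw [map_mul, map_inv₀, hts] at this
    rw [this]; simp [a1, b1]
  have hHt : H * t * 2 = A 1 0 + I * B 1 0 := by
    rw [hH]; field_simp
    linear_combination (2 * (A 0 1 - A 1 0)) * I2 + 2 * s00
  constructor
  · congr 1
    ext i j
    fin_cases i <;> fin_cases j <;> simp
    · linear_combination ha - I * hb - (p / 2 : ℂ) * I2
    · linear_combination hHt - s00
    · linear_combination -hQt
    · linear_combination tA - I * tB - (ha - I * hb - (p / 2 : ℂ) * I2)
  · congr 1
    ext i j
    fin_cases i <;> fin_cases j <;> simp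
    · linear_combination ha + I * hb + (p / 2 : ℂ) * I2
    · linear_combination hQc
    · linear_combination -hHt
    · linear_combination tA + I * tB - (ha + I * hb + (p / 2 : ℂ) * I2)

/-- the connection coefficients `U = F⁻¹F_z` and `V = F⁻¹F_z̄` of the
`SU(2)`-frame of a conformal immersion `f : Σ → su(2)` are given by the standard
matrices in terms of `u`, `Q` and `H`. -/
theorem connection_coefficients
    (S : Set ℂ) (hS : IsOpen S)
    (f : ℂ → M2) (u : ℂ → ℝ) (F : ℂ → M2)
    (hf : ContDiffOn ℝ (⊤ : ℕ∞) f S)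
    (hu : ContDiffOn ℝ (⊤ : ℕ∞) u S)
    (hF : ContDiffOn ℝ (⊤ : ℕ∞) F S)
    (hsu2 : ∀ z ∈ S, (f z)ᴴ = -(f z) ∧ (f z).trace = 0)
    (hconf : ∀ z ∈ S,
      ip (px f z) (px f z) = ((4 * Real.exp (2 * u z) : ℝ) : ℂ) ∧
      ip (py f z) (py f z) = ((4 * Real.exp (2 * u z) : ℝ) : ℂ) ∧
      ip (px f z) (py f z) = 0)
    (hFunit : ∀ z ∈ S, (F z)ᴴ * F z = 1 ∧ (F z).det = 1)
    (hFe1 : ∀ z ∈ S, F z * e1 * (F z)⁻¹ = (((2 * Real.exp (u z))⁻¹ : ℝ) : ℂ) • px f z)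
    (hFe2 : ∀ z ∈ S, F z * e2 * (F z)⁻¹ = (((2 * Real.exp (u z))⁻¹ : ℝ) : ℂ) • py f z)
    (N : ℂ → M2) (hN : ∀ z, N z = F z * e3 * (F z)⁻¹)
    (Q : ℂ → ℂ) (hQ : ∀ z, Q z = ip (N z) (dz (dz f) z))
    (H : ℂ → ℂ)
    (hH : ∀ z, H z = (((8 * Real.exp (2 * u z))⁻¹ : ℝ) : ℂ) *
      ip (px (px f) z + py (py f) z) (N z)) :
    ∀ z ∈ S,
      (F z)⁻¹ * dz F z = (2:ℂ)⁻¹ •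
        !![dzR u z, -2 * H z * (Real.exp (u z) : ℂ);
           Q z * (Real.exp (-(u z)) : ℂ), -(dzR u z)] ∧
      (F z)⁻¹ * dzb F z = (2:ℂ)⁻¹ •
        !![-(dzbR u z), -((starRingEnd ℂ) (Q z)) * (Real.exp (-(u z)) : ℂ);
           2 * H z * (Real.exp (u z) : ℂ), dzbR u z] := by
  intro z hz
  have hFd : DifferentiableAt ℝ F z :=
    (hF.contDiffAt (hS.mem_nhds hz)).differentiableAt (by simp)
  have hud : DifferentiableAt ℝ u z :=
    (hu.contDiffAt (hS.mem_nhds hz)).differentiableAt (by simp)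
  obtain ⟨dx, dy, hsym⟩ : DifferentiableAt ℝ (px f) z ∧ DifferentiableAt ℝ (py f) z ∧
      px (py f) z = py (px f) z := symmG (hf.contDiffAt (hS.mem_nhds hz))
  have hl := (hFunit z hz).1
  have hinv : (F z)⁻¹ = (F z)ᴴ := Matrix.inv_eq_left_inv hl
  set A := (F z)ᴴ * px F z with hA
  set B := (F z)ᴴ * py F z with hB
  have sA : Aᴴ = -A := skew hS hz hFd hFunit 1
  have sB : Bᴴ = -B := skew hS hz hFd hFunit I
  have tA : A.trace = 0 := trace_zero hS hz hFd hFunit 1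
  have tB : B.trace = 0 := trace_zero hS hz hFd hFunit I
  set c : ℂ := ((2 * Real.exp (u z) : ℝ) : ℂ) with hc
  have hxx : px (px f) z = c • (F z * XX (pxR u z) A e1 * (F z)ᴴ) :=
    frame_deriv hS hz hFd hud hFunit e1 hFe1 1
  have hyx : py (px f) z = c • (F z * XX (pyR u z) B e1 * (F z)ᴴ) :=
    frame_deriv hS hz hFd hud hFunit e1 hFe1 I
  have hxy : px (py f) z = c • (F z * XX (pxR u z) A e2 * (F z)ᴴ) :=
    frame_deriv hS hz hFd hud hFunit e2 hFe2 1
  have hyy : py (py f) z = c • (F z * XX (pyR u z) B e2 * (F z)ᴴ) :=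
    frame_deriv hS hz hFd hud hFunit e2 hFe2 I
  have ht : (Real.exp (u z) : ℂ) ≠ 0 := by
    exact_mod_cast (Real.exp_pos _).ne'
  have hct : c = 2 * (Real.exp (u z) : ℂ) := by rw [hc]; push_cast; rfl
  have hc0 : c ≠ 0 := by rw [hct]; simpa using ht
  have hs : XX (pxR u z) A e2 = XX (pyR u z) B e1 := by
    rw [hxy, hyx] at hsym
    have h1 := smul_right_injective M2 hc0 hsym
    have h2 := congrArg (fun M => (F z)ᴴ * M * F z) h1
    have h3 : ∀ M : M2, (F z)ᴴ * (F z * M * (F z)ᴴ) * F z = M := by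
      intro M
      rw [show (F z)ᴴ * (F z * M * (F z)ᴴ) * F z = ((F z)ᴴ * F z) * M * ((F z)ᴴ * F z) by
        simp only [mul_assoc], hl, one_mul, mul_one]
    simpa only [h3] using h2
  have hNz : N z = F z * e3 * (F z)ᴴ := by rw [hN, hinv]
  have hdd : dz (dz f) z = (2:ℂ)⁻¹ • ((2:ℂ)⁻¹ • (px (px f) z - I • px (py f) z)
      - I • ((2:ℂ)⁻¹ • (py (px f) z - I • py (py f) z))) := by
    have h1 : px (dz f) z = (2:ℂ)⁻¹ • (px (px f) z - I • px (py f) z) := dzdz dx dy 1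
    have h2 : py (dz f) z = (2:ℂ)⁻¹ • (py (px f) z - I • py (py f) z) := dzdz dx dy I
    rw [← h1, ← h2]; rfl
  have ips : ∀ (a : ℂ) (X Y : M2), ip X (a • Y) = a * ip X Y := by
    intro a X Y; unfold ip; rw [Matrix.mul_smul, Matrix.trace_smul, smul_eq_mul]; ring
  have ipc : ∀ (X Y : M2), ip X Y = ip Y X := by
    intro X Y; unfold ip; rw [Matrix.trace_mul_comm]
  have hQ' : Q z = ((Real.exp (u z) : ℂ) / 2) * ip e3 (XX (pxR u z) A e1 - I • XX (pxR u z) A e2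
      - I • (XX (pyR u z) B e1 - I • XX (pyR u z) B e2)) := by
    rw [hQ, hNz, ← ip_conj hl (X := e3), ← ips, hdd, hxx, hxy, hyx, hyy, hct]
    congr 1
    simp only [mul_sub, sub_mul, Matrix.mul_smul, Matrix.smul_mul]
    module
  have hH' : H z = ((Real.exp (u z) : ℂ) / (4 * (Real.exp (u z) : ℂ) ^ 2)) *
      ip (XX (pxR u z) A e1 + XX (pyR u z) B e2) e3 := by
    rw [hH, hNz, ipc _ e3, ← ip_conj hl (X := e3), hxx, hyy, ← smul_add, ipc, ips, hct,
      mul_add, add_mul, show (2 * u z) = u z + u z by ring, Real.exp_add]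
    push_cast
    push_cast at ht
    field_simp
    ring
  have main := final_alg A B (pxR u z) (pyR u z) (Real.exp (u z) : ℂ) ht
    (Complex.conj_ofReal _) (Q z) (H z) sA sB tA tB hs hQ' hH'
  have hneg : (Real.exp (-(u z)) : ℂ) = (Real.exp (u z) : ℂ)⁻¹ := by
    rw [Real.exp_neg]; push_cast; rfl
  rw [hneg, hinv]
  have hU : (F z)ᴴ * dz F z = (2:ℂ)⁻¹ • (A - I • B) := by
    rw [hA, hB]; unfold dz
    rw [Matrix.mul_smul, mul_sub, Matrix.mul_smul]
  have hV : (F z)ᴴ * dzb F z = (2:ℂ)⁻¹ • (A + I • B) := by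
    rw [hA, hB]; unfold dzb
    rw [Matrix.mul_smul, mul_add, Matrix.mul_smul]
  rw [hU, hV]
  exact main
end
end

section
/- Let Σ ⊆ ℂ be open and let u : Σ → ℝ, Q : Σ → ℂ, H : Σ → ℝ be smooth. Define the matrix-valued functions U = (1/2)[[u_z, -2H e^u],[Q e^{-u}, -u_z]] and V = (1/2)[[-u_{z̄}, -Q̄ e^{-u}],[2H e^u, u_{z̄}]]. Then the zero-curvature (Maurer–Cartan) equation ∂_z V - ∂_{z̄} U + [U,V] = 0 holds on Σ if and only if both u_{z z̄} + H² e^{2u} - (1/4)|Q|² e^{-2u} = 0 and ∂_{z̄} Q = 2 e^{2u} ∂_z H hold on Σ. -/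
open Matrix Complex

noncomputable section

attribute [local instance] Matrix.linftyOpNormedAddCommGroup Matrix.linftyOpNormedSpace
  Matrix.linftyOpNormedRing Matrix.linftyOpNormedAlgebra

theorem M2_diff {f : ℂ → M2} {z : ℂ}
    (h : ∀ i j, DifferentiableAt ℝ (fun w => f w i j) z) : DifferentiableAt ℝ f z := by
  have e : f = fun w => ∑ i, ∑ j, f w i j • (Matrix.single i j (1:ℂ) : M2) := by
    funext w
    conv_lhs => rw [Matrix.matrix_eq_sum_single (f w)]
    simp
  rw [e]
  refine DifferentiableAt.fun_sum fun i _ => DifferentiableAt.fun_sum fun j _ => ?_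
  exact (h i j).smul_const _

theorem M2_fderiv {f : ℂ → M2} {z : ℂ}
    (h : ∀ i j, DifferentiableAt ℝ (fun w => f w i j) z) (v : ℂ) (i j : Fin 2) :
    (fderiv ℝ f z v) i j = fderiv ℝ (fun w => f w i j) z v := by
  let L : M2 →L[ℝ] ℂ := LinearMap.toContinuousLinearMap (Matrix.entryLinearMap ℝ ℂ i j)
  have := (L.hasFDerivAt (x := f z)).comp z (M2_diff h).hasFDerivAt
  have e : (fun w => f w i j) = L ∘ f := rfl
  rw [e, this.fderiv]
  rfl

theorem fd_ofReal {g : ℂ → ℝ} {z : ℂ} (h : DifferentiableAt ℝ g z) :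
    HasFDerivAt (fun w => (g w : ℂ)) (Complex.ofRealCLM.comp (fderiv ℝ g z)) z :=
  (Complex.ofRealCLM.hasFDerivAt (x := g z)).comp z h.hasFDerivAt

theorem fd_conj {g : ℂ → ℂ} {z : ℂ} (h : DifferentiableAt ℝ g z) :
    HasFDerivAt (fun w => (starRingEnd ℂ) (g w))
      ((Complex.conjCLE : ℂ →L[ℝ] ℂ).comp (fderiv ℝ g z)) z :=
  ((Complex.conjCLE : ℂ →L[ℝ] ℂ).hasFDerivAt (x := g z)).comp z h.hasFDerivAt

theorem mat_zero_iff {A : M2} {g c : ℂ} {d : ℂ} (h00 : A 0 0 = -g) (h11 : A 1 1 = g)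
    (h10 : A 1 0 = d * c) (h01 : A 0 1 = d * (starRingEnd ℂ) c) (hd : d ≠ 0) :
    A = 0 ↔ g = 0 ∧ c = 0 := by
  constructor
  · intro h
    rw [h] at h11 h10
    simp only [Matrix.zero_apply] at h11 h10
    exact ⟨h11.symm, (mul_eq_zero.mp h10.symm).resolve_left hd⟩
  · rintro ⟨rfl, rfl⟩
    ext i j
    fin_cases i <;> fin_cases j <;> simp_all

/-- the zero-curvature (Maurer–Cartan) equation for the matrices `U`, `V`
built from `u`, `Q`, `H` is equivalent to the Gauss and Codazzi equations. -/
theorem zero_curvature_iff_gauss_codazzi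
    (S : Set ℂ) (hS : IsOpen S)
    (u : ℂ → ℝ) (Q : ℂ → ℂ) (H : ℂ → ℝ)
    (hu : ContDiffOn ℝ (⊤ : ℕ∞) u S)
    (hQ : ContDiffOn ℝ (⊤ : ℕ∞) Q S)
    (hH : ContDiffOn ℝ (⊤ : ℕ∞) H S)
    (U V : ℂ → M2)
    (hU : ∀ z, U z = (2:ℂ)⁻¹ •
      !![dzR u z, -2 * (H z : ℂ) * (Real.exp (u z) : ℂ);
         Q z * (Real.exp (-(u z)) : ℂ), -(dzR u z)])
    (hV : ∀ z, V z = (2:ℂ)⁻¹ •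
      !![-(dzbR u z), -((starRingEnd ℂ) (Q z)) * (Real.exp (-(u z)) : ℂ);
         2 * (H z : ℂ) * (Real.exp (u z) : ℂ), dzbR u z]) :
    (∀ z ∈ S, dz V z - dzb U z + (U z * V z - V z * U z) = 0) ↔
    (∀ z ∈ S,
      dzbC (dzR u) z + (H z : ℂ) ^ 2 * (Real.exp (2 * u z) : ℂ)
        - (4:ℂ)⁻¹ * ((‖Q z‖ ^ 2 : ℝ) : ℂ) * (Real.exp (-(2 * u z)) : ℂ) = 0 ∧
      dzbC Q z = 2 * (Real.exp (2 * u z) : ℂ) * dzR H z) := by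
  refine forall_congr' fun z => forall_congr' fun hz => ?_
  have hz' := hS.mem_nhds hz
  have cu := hu.contDiffAt hz'
  have du : DifferentiableAt ℝ u z := cu.differentiableAt (by simp)
  have dQ : DifferentiableAt ℝ Q z := (hQ.contDiffAt hz').differentiableAt (by simp)
  have dH : DifferentiableAt ℝ H z := (hH.contDiffAt hz').differentiableAt (by simp)
  have hsym : IsSymmSndFDerivAt ℝ u z := cu.isSymmSndFDerivAt (by simp; norm_cast)
  have d2 : DifferentiableAt ℝ (fderiv ℝ u) z :=
    (cu.fderiv_right (m := 1) (by norm_cast)).differentiableAt (by simp)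
  have dp (v : ℂ) : HasFDerivAt (fun w => fderiv ℝ u w v)
      ((ContinuousLinearMap.apply ℝ ℝ v).comp (fderiv ℝ (fderiv ℝ u) z)) z :=
    ((ContinuousLinearMap.apply ℝ ℝ v).hasFDerivAt).comp z d2.hasFDerivAt
  have hs := hsym.eq 1 Complex.I
  have dpc (v : ℂ) : HasFDerivAt (fun w => ((fderiv ℝ u w v : ℝ) : ℂ))
      (Complex.ofRealCLM.comp
        ((ContinuousLinearMap.apply ℝ ℝ v).comp (fderiv ℝ (fderiv ℝ u) z))) z :=
    (Complex.ofRealCLM.hasFDerivAt).comp z (dp v)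
  have kz : HasFDerivAt (dzR u) _ z :=
    ((dpc 1).sub ((dpc Complex.I).const_mul Complex.I)).const_mul (2:ℂ)⁻¹
  have kzb : HasFDerivAt (dzbR u) _ z :=
    ((dpc 1).add ((dpc Complex.I).const_mul Complex.I)).const_mul (2:ℂ)⁻¹
  have ke : HasFDerivAt (fun w => (Real.exp (u w) : ℂ)) _ z :=
    (Complex.ofRealCLM.hasFDerivAt).comp z du.hasFDerivAt.exp
  have kn : HasFDerivAt (fun w => (Real.exp (-(u w)) : ℂ)) _ z :=
    (Complex.ofRealCLM.hasFDerivAt).comp z du.hasFDerivAt.neg.exp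
  have kH := fd_ofReal dH
  have kQ := dQ.hasFDerivAt
  have kQb := fd_conj dQ
  have U00 : HasFDerivAt (fun w => U w 0 0) _ z :=
    HasFDerivAt.congr_of_eventuallyEq (kz.const_mul (2:ℂ)⁻¹)
      (Filter.Eventually.of_forall fun w => congrArg (fun M : M2 => M 0 0) (hU w))
  have U01 : HasFDerivAt (fun w => U w 0 1) _ z :=
    HasFDerivAt.congr_of_eventuallyEq (((kH.const_mul (-2:ℂ)).mul ke).const_mul (2:ℂ)⁻¹)
      (Filter.Eventually.of_forall fun w => congrArg (fun M : M2 => M 0 1) (hU w))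
  have U10 : HasFDerivAt (fun w => U w 1 0) _ z :=
    HasFDerivAt.congr_of_eventuallyEq ((kQ.mul kn).const_mul (2:ℂ)⁻¹)
      (Filter.Eventually.of_forall fun w => congrArg (fun M : M2 => M 1 0) (hU w))
  have U11 : HasFDerivAt (fun w => U w 1 1) _ z :=
    HasFDerivAt.congr_of_eventuallyEq (kz.neg.const_mul (2:ℂ)⁻¹)
      (Filter.Eventually.of_forall fun w => congrArg (fun M : M2 => M 1 1) (hU w))
  have V00 : HasFDerivAt (fun w => V w 0 0) _ z :=
    HasFDerivAt.congr_of_eventuallyEq (kzb.neg.const_mul (2:ℂ)⁻¹)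
      (Filter.Eventually.of_forall fun w => congrArg (fun M : M2 => M 0 0) (hV w))
  have V01 : HasFDerivAt (fun w => V w 0 1) _ z :=
    HasFDerivAt.congr_of_eventuallyEq ((kQb.neg.mul kn).const_mul (2:ℂ)⁻¹)
      (Filter.Eventually.of_forall fun w => congrArg (fun M : M2 => M 0 1) (hV w))
  have V10 : HasFDerivAt (fun w => V w 1 0) _ z :=
    HasFDerivAt.congr_of_eventuallyEq (((kH.const_mul (2:ℂ)).mul ke).const_mul (2:ℂ)⁻¹)
      (Filter.Eventually.of_forall fun w => congrArg (fun M : M2 => M 1 0) (hV w))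
  have V11 : HasFDerivAt (fun w => V w 1 1) _ z :=
    HasFDerivAt.congr_of_eventuallyEq (kzb.const_mul (2:ℂ)⁻¹)
      (Filter.Eventually.of_forall fun w => congrArg (fun M : M2 => M 1 1) (hV w))
  have DU : ∀ i j, DifferentiableAt ℝ (fun w => U w i j) z := by
    intro i j
    fin_cases i <;> fin_cases j
    exacts [U00.differentiableAt, U01.differentiableAt, U10.differentiableAt, U11.differentiableAt]
  have DV : ∀ i j, DifferentiableAt ℝ (fun w => V w i j) z := by
    intro i j
    fin_cases i <;> fin_cases j
    exacts [V00.differentiableAt, V01.differentiableAt, V10.differentiableAt, V11.differentiableAt]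
  have hE : ((Real.exp (u z) : ℝ) : ℂ) * ((Real.exp (-(u z)) : ℝ) : ℂ) = 1 := by
    rw [← Complex.ofReal_mul, ← Real.exp_add]; simp
  have hE2 : ((Real.exp (2 * u z) : ℝ) : ℂ) = ((Real.exp (u z) : ℝ) : ℂ) ^ 2 := by
    rw [two_mul, Real.exp_add]; push_cast; ring
  have hN2 : ((Real.exp (-(2 * u z)) : ℝ) : ℂ) = ((Real.exp (-(u z)) : ℝ) : ℂ) ^ 2 := by
    rw [two_mul, neg_add, Real.exp_add]; push_cast; ring
  have hQ2 : ((‖Q z‖ ^ 2 : ℝ) : ℂ) = Q z * (starRingEnd ℂ) (Q z) := by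
    rw [Complex.mul_conj, Complex.normSq_eq_norm_sq]
  have hEc : (starRingEnd ℂ) ((Real.exp (u z) : ℝ) : ℂ) = ((Real.exp (u z) : ℝ) : ℂ) :=
    Complex.conj_ofReal _
  have hn0 : ((Real.exp (-(u z)) : ℝ) : ℂ) ≠ 0 := right_ne_zero_of_mul_eq_one hE
  rw [← sub_eq_zero (a := dzbC Q z), hE2, hN2, hQ2]
  have h2c : (starRingEnd ℂ) (2:ℂ) = 2 := map_ofNat _ 2
  have hI : Complex.I ^ 2 = -1 := Complex.I_sq
  refine mat_zero_iff (d := -(2:ℂ)⁻¹ * ((Real.exp (-(u z)) : ℝ) : ℂ)) ?_ ?_ ?_ ?_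
    (mul_ne_zero (by norm_num) hn0)
  all_goals
    simp only [dz, dzb, px, py, Matrix.add_apply, Matrix.sub_apply, Matrix.smul_apply,
      M2_fderiv DU, M2_fderiv DV, U00.fderiv, U01.fderiv, U10.fderiv, U11.fderiv,
      V00.fderiv, V01.fderiv, V10.fderiv, V11.fderiv, Matrix.mul_apply, Fin.sum_univ_two,
      dzbC, pxC, pyC, kz.fderiv]
    simp only [hU, hV]
    simp [dzR, dzbR, pxR, pyR, -Complex.ofReal_exp, hs, hEc, h2c, -Complex.ofReal_neg]
    generalize ((Real.exp (u z) : ℝ) : ℂ) = E at *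
    generalize ((Real.exp (-(u z)) : ℝ) : ℂ) = N at *
  · ring
  · ring
  · linear_combination (-(E / 2) * ((fderiv ℝ H z 1 : ℝ) - Complex.I * (fderiv ℝ H z Complex.I : ℝ))) * hE
  · linear_combination (-(E / 2) * ((fderiv ℝ H z 1 : ℝ) + Complex.I * (fderiv ℝ H z Complex.I : ℝ))) * hE
end
end

section
/- Let Σ ⊆ ℂ be open and connected and let u : Σ → ℝ, Q : Σ → ℂ, H : Σ → ℝ be smooth. For λ ∈ ℂ\{0} define Û(λ) = (1/2)[[u_z, -2H e^u λ⁻¹],[Q e^{-u} λ⁻¹, -u_z]] and V̂(λ) = (1/2)[[-u_{z̄}, -Q̄ e^{-u} λ],[2H e^u λ, u_{z̄}]]. Then the zero-curvature equation ∂_z V̂(λ) - ∂_{z̄} Û(λ) + [Û(λ), V̂(λ)] = 0 holds on Σ for every λ ∈ ℂ\{0} if and only if both of the following hold: (i) the zero-curvature equation holds at λ = 1, and (ii) H is constant on Σ. -/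
open Matrix Complex

noncomputable section

attribute [local instance] Matrix.linftyOpNormedAddCommGroup Matrix.linftyOpNormedSpace
  Matrix.linftyOpNormedRing Matrix.linftyOpNormedAlgebra

lemma aux_fderiv_mat (a b c d : ℂ → ℂ) (z v : ℂ)
    (ha : DifferentiableAt ℝ a z) (hb : DifferentiableAt ℝ b z)
    (hc : DifferentiableAt ℝ c z) (hd : DifferentiableAt ℝ d z) :
    fderiv ℝ (fun w => (!![a w, b w; c w, d w] : M2)) z v =
      !![fderiv ℝ a z v, fderiv ℝ b z v; fderiv ℝ c z v, fderiv ℝ d z v] := by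
  have e : (fun w => (!![a w, b w; c w, d w] : M2)) = fun w =>
      a w • (!![1, 0; 0, 0] : M2) + b w • (!![0, 1; 0, 0] : M2)
      + c w • (!![0, 0; 1, 0] : M2) + d w • (!![0, 0; 0, 1] : M2) := by
    funext w
    ext i j
    fin_cases i <;> fin_cases j <;> simp
  have h := (((ha.hasFDerivAt.smul_const (!![1, 0; 0, 0] : M2)).add
    (hb.hasFDerivAt.smul_const (!![0, 1; 0, 0] : M2))).add
    (hc.hasFDerivAt.smul_const (!![0, 0; 1, 0] : M2))).add
    (hd.hasFDerivAt.smul_const (!![0, 0; 0, 1] : M2))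
  rw [e]
  refine (congrArg (fun L => L v) h.fderiv).trans ?_
  ext i j
  fin_cases i <;> fin_cases j <;> simp

lemma aux_dz_mat (a b c d : ℂ → ℂ) (z : ℂ)
    (ha : DifferentiableAt ℝ a z) (hb : DifferentiableAt ℝ b z)
    (hc : DifferentiableAt ℝ c z) (hd : DifferentiableAt ℝ d z) :
    dz (fun w => (!![a w, b w; c w, d w] : M2)) z =
      !![dzC a z, dzC b z; dzC c z, dzC d z] := by
  simp only [dz, px, py, aux_fderiv_mat a b c d z _ ha hb hc hd]
  ext i j
  fin_cases i <;> fin_cases j <;> simp [dzC, pxC, pyC]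

lemma aux_dzb_mat (a b c d : ℂ → ℂ) (z : ℂ)
    (ha : DifferentiableAt ℝ a z) (hb : DifferentiableAt ℝ b z)
    (hc : DifferentiableAt ℝ c z) (hd : DifferentiableAt ℝ d z) :
    dzb (fun w => (!![a w, b w; c w, d w] : M2)) z =
      !![dzbC a z, dzbC b z; dzbC c z, dzbC d z] := by
  simp only [dzb, px, py, aux_fderiv_mat a b c d z _ ha hb hc hd]
  ext i j
  fin_cases i <;> fin_cases j <;> simp [dzbC, pxC, pyC]

lemma aux_dzC_mul (k : ℂ) (f : ℂ → ℂ) (z : ℂ) (hf : DifferentiableAt ℝ f z) :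
    dzC (fun w => k * f w) z = k * dzC f z := by
  simp only [dzC, pxC, pyC, fderiv_const_mul hf]
  simp
  ring

lemma aux_dzbC_mul (k : ℂ) (f : ℂ → ℂ) (z : ℂ) (hf : DifferentiableAt ℝ f z) :
    dzbC (fun w => k * f w) z = k * dzbC f z := by
  simp only [dzbC, pxC, pyC, fderiv_const_mul hf]
  simp
  ring

lemma aux_fderiv_h (H u : ℂ → ℝ) (z v : ℂ) (hH : DifferentiableAt ℝ H z)
    (hu : DifferentiableAt ℝ u z) :
    fderiv ℝ (fun w => (H w : ℂ) * (Real.exp (u w) : ℂ)) z v =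
      ((fderiv ℝ H z v : ℝ) : ℂ) * (Real.exp (u z) : ℂ)
      + (H z : ℂ) * (Real.exp (u z) : ℂ) * ((fderiv ℝ u z v : ℝ) : ℂ) := by
  have h1 := hH.hasFDerivAt.mul hu.hasFDerivAt.exp
  have h2 := (Complex.ofRealCLM.hasFDerivAt (x := H z * Real.exp (u z))).comp z h1
  have e : (fun w => (H w : ℂ) * (Real.exp (u w) : ℂ)) =
      (Complex.ofRealCLM ∘ fun w => H w * Real.exp (u w)) := by
    funext w; simp
  rw [e]
  refine (congrArg (fun L => L v) h2.fderiv).trans ?_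
  simp
  ring

lemma aux_zc (a b h q p : ℂ → ℂ) (l z : ℂ) (U V : ℂ → M2)
    (ha : DifferentiableAt ℝ a z) (hb : DifferentiableAt ℝ b z)
    (hh : DifferentiableAt ℝ h z) (hq : DifferentiableAt ℝ q z)
    (hp : DifferentiableAt ℝ p z) (hl : l ≠ 0)
    (hU : U = fun w => !![2⁻¹ * a w, (-l⁻¹) * h w; (2⁻¹ * l⁻¹) * q w, (-2⁻¹) * a w])
    (hV : V = fun w => !![(-2⁻¹) * b w, (-2⁻¹ * l) * p w; l * h w, 2⁻¹ * b w]) :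
    dz V z - dzb U z + (U z * V z - V z * U z) = 0 ↔
      (-2⁻¹ * dzC b z - 2⁻¹ * dzbC a z - h z * h z + 4⁻¹ * (q z * p z) = 0 ∧
       l * (-2⁻¹ * dzC p z - 2⁻¹ * (a z * p z)) + l⁻¹ * (dzbC h z - h z * b z) = 0 ∧
       l * (dzC h z - h z * a z) + l⁻¹ * (-2⁻¹ * dzbC q z - 2⁻¹ * (q z * b z)) = 0) := by
  subst hU hV
  rw [aux_dz_mat _ _ _ _ z (hb.const_mul _) (hp.const_mul _) (hh.const_mul _) (hb.const_mul _),
    aux_dzb_mat _ _ _ _ z (ha.const_mul _) (hh.const_mul _) (hq.const_mul _) (ha.const_mul _),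
    aux_dzC_mul _ _ _ hb, aux_dzC_mul _ _ _ hb, aux_dzC_mul _ _ _ hp, aux_dzC_mul _ _ _ hh,
    aux_dzbC_mul _ _ _ ha, aux_dzbC_mul _ _ _ ha, aux_dzbC_mul _ _ _ hq, aux_dzbC_mul _ _ _ hh]
  have hll : l * l⁻¹ = 1 := mul_inv_cancel₀ hl
  rw [← Matrix.ext_iff]
  simp only [Fin.forall_fin_two, Matrix.add_apply, Matrix.sub_apply, Matrix.mul_apply,
    Fin.sum_univ_two, Matrix.zero_apply, Matrix.of_apply, Matrix.cons_val', Matrix.cons_val_zero,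
    Matrix.cons_val_one, Matrix.cons_val_fin_one]
  generalize l⁻¹ = m at *
  constructor
  · rintro ⟨⟨h1, h2⟩, h3, h4⟩
    refine ⟨?_, ?_, ?_⟩
    · linear_combination h1 + (h z * h z - 4⁻¹ * (q z * p z)) * hll
    · linear_combination h2
    · linear_combination h3
  · rintro ⟨h1, h2, h3⟩
    refine ⟨⟨?_, ?_⟩, ?_, ?_⟩
    · linear_combination h1 - (h z * h z - 4⁻¹ * (q z * p z)) * hll
    · linear_combination h2
    · linear_combination h3
    · linear_combination -h1 + (h z * h z - 4⁻¹ * (q z * p z)) * hll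

/-- the λ-family zero-curvature equation holds for all λ ≠ 0 iff it
holds at λ = 1 and the mean curvature function `H` is constant. -/
theorem loop_zero_curvature_iff_cmc
    (S : Set ℂ) (hS : IsOpen S) (hSconn : IsConnected S)
    (u : ℂ → ℝ) (Q : ℂ → ℂ) (H : ℂ → ℝ)
    (hu : ContDiffOn ℝ (⊤ : ℕ∞) u S)
    (hQ : ContDiffOn ℝ (⊤ : ℕ∞) Q S)
    (hH : ContDiffOn ℝ (⊤ : ℕ∞) H S)
    (Uh Vh : ℂ → ℂ → M2)
    (hU : ∀ l : ℂ, ∀ z : ℂ, Uh l z = (2:ℂ)⁻¹ •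
      !![dzR u z, -2 * (H z : ℂ) * (Real.exp (u z) : ℂ) * l⁻¹;
         Q z * (Real.exp (-(u z)) : ℂ) * l⁻¹, -(dzR u z)])
    (hV : ∀ l : ℂ, ∀ z : ℂ, Vh l z = (2:ℂ)⁻¹ •
      !![-(dzbR u z), -((starRingEnd ℂ) (Q z)) * (Real.exp (-(u z)) : ℂ) * l;
         2 * (H z : ℂ) * (Real.exp (u z) : ℂ) * l, dzbR u z]) :
    (∀ l : ℂ, l ≠ 0 →
      ∀ z ∈ S, dz (Vh l) z - dzb (Uh l) z + (Uh l z * Vh l z - Vh l z * Uh l z) = 0) ↔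
    ((∀ z ∈ S, dz (Vh 1) z - dzb (Uh 1) z + (Uh 1 z * Vh 1 z - Vh 1 z * Uh 1 z) = 0) ∧
      (∀ z ∈ S, ∀ w ∈ S, H z = H w)) := by
  have key : ∀ z ∈ S, ∃ X α δ : ℂ, ∀ l : ℂ, l ≠ 0 →
      (dz (Vh l) z - dzb (Uh l) z + (Uh l z * Vh l z - Vh l z * Uh l z) = 0 ↔
      (X = 0 ∧ l * α + l⁻¹ * (dzbR H z * (Real.exp (u z) : ℂ)) = 0 ∧
        l * (dzR H z * (Real.exp (u z) : ℂ)) + l⁻¹ * δ = 0)) := by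
    intro z hz
    have hSz : S ∈ nhds z := hS.mem_nhds hz
    have cu := hu.contDiffAt hSz
    have du : DifferentiableAt ℝ u z := cu.differentiableAt (by simp)
    have dQ : DifferentiableAt ℝ Q z := (hQ.contDiffAt hSz).differentiableAt (by simp)
    have dH : DifferentiableAt ℝ H z := (hH.contDiffAt hSz).differentiableAt (by simp)
    have dfu : DifferentiableAt ℝ (fderiv ℝ u) z :=
      (cu.fderiv_right (m := 1) (by norm_cast)).differentiableAt (by simp)
    have dofR : ∀ f : ℂ → ℝ, DifferentiableAt ℝ f z →
        DifferentiableAt ℝ (fun w => (f w : ℂ)) z := fun f hf =>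
      (Complex.ofRealCLM.differentiableAt (x := f z)).comp z hf
    have dpx : DifferentiableAt ℝ (fun w => (pxR u w : ℂ)) z :=
      dofR _ (dfu.clm_apply (differentiableAt_const _))
    have dpy : DifferentiableAt ℝ (fun w => (pyR u w : ℂ)) z :=
      dofR _ (dfu.clm_apply (differentiableAt_const _))
    have da : DifferentiableAt ℝ (dzR u) z := (dpx.sub (dpy.const_mul _)).const_mul _
    have db : DifferentiableAt ℝ (dzbR u) z := (dpx.add (dpy.const_mul _)).const_mul _
    have de := dofR _ du.exp
    have den := dofR _ du.neg.exp
    have dh := (dofR _ dH).mul de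
    have dq := dQ.mul den
    have dp := ((Complex.conjCLE.differentiableAt (x := Q z)).comp z dQ).mul den
    have e1' : dzbC (fun w => (H w : ℂ) * (Real.exp (u w) : ℂ)) z
        - ((H z : ℂ) * (Real.exp (u z) : ℂ)) * dzbR u z
        = dzbR H z * (Real.exp (u z) : ℂ) := by
      simp only [dzbC, pxC, pyC, aux_fderiv_h H u z _ dH du, dzbR, pxR, pyR]
      ring
    have e2' : dzC (fun w => (H w : ℂ) * (Real.exp (u w) : ℂ)) z
        - ((H z : ℂ) * (Real.exp (u z) : ℂ)) * dzR u z
        = dzR H z * (Real.exp (u z) : ℂ) := by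
      simp only [dzC, pxC, pyC, aux_fderiv_h H u z _ dH du, dzR, pxR, pyR]
      ring
    rw [← e1', ← e2']
    refine ⟨_, _, _, fun l hl => aux_zc (dzR u) (dzbR u)
      (fun w => (H w : ℂ) * (Real.exp (u w) : ℂ))
      (fun w => Q w * (Real.exp (-(u w)) : ℂ))
      (fun w => (starRingEnd ℂ) (Q w) * (Real.exp (-(u w)) : ℂ)) l z _ _ da db dh dq dp hl ?_ ?_⟩
    · funext w
      rw [hU]
      ext i j
      fin_cases i <;> fin_cases j <;> simp <;> ring
    · funext w
      rw [hV]
      ext i j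
      fin_cases i <;> fin_cases j <;> simp <;> ring
  constructor
  · intro h
    refine ⟨h 1 one_ne_zero, ?_⟩
    have hf : Set.EqOn (fderiv ℝ H) 0 S := by
      intro z hz
      obtain ⟨X, α, δ, hk⟩ := key z hz
      obtain ⟨-, h1, -⟩ := (hk 1 one_ne_zero).1 (h 1 one_ne_zero z hz)
      obtain ⟨-, h2, -⟩ := (hk 2 two_ne_zero).1 (h 2 two_ne_zero z hz)
      have h3 : dzbR H z * (Real.exp (u z) : ℂ) = 0 := by
        rw [inv_one] at h1
        linear_combination (4/3) * h1 - (2/3) * h2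
      have hne : (Real.exp (u z) : ℂ) ≠ 0 := by
        exact_mod_cast (Real.exp_pos (u z)).ne'
      have h4 : dzbR H z = 0 := (mul_eq_zero.1 h3).resolve_right hne
      have h5 : (pxR H z : ℂ) + Complex.I * (pyR H z : ℂ) = 0 := by
        simpa [dzbR] using h4
      have h6 : pxR H z = 0 := by simpa using congrArg Complex.re h5
      have h7 : pyR H z = 0 := by simpa using congrArg Complex.im h5
      ext v
      have hv : v = v.re • (1:ℂ) + v.im • Complex.I := by
        apply Complex.ext <;> simp
      rw [hv, map_add, map_smul, map_smul]
      simp only [pxR, pyR] at h6 h7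
      simp [h6, h7]
    intro z hz w hw
    exact hS.is_const_of_fderiv_eq_zero hSconn.isPreconnected
      (hH.differentiableOn (by simp)) hf hz hw
  · rintro ⟨h, hc⟩ l hl z hz
    obtain ⟨X, α, δ, hk⟩ := key z hz
    have hf : fderiv ℝ H z = 0 := by
      have : H =ᶠ[nhds z] fun _ => H z := by
        filter_upwards [hS.mem_nhds hz] with w hw using hc w hw z hz
      rw [this.fderiv_eq]
      simp
    have z1 : dzbR H z = 0 := by simp [dzbR, pxR, pyR, hf]
    have z2 : dzR H z = 0 := by simp [dzR, pxR, pyR, hf]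
    have h1 := (hk 1 one_ne_zero).1 (h z hz)
    rw [hk l hl]
    simp only [z1, z2, zero_mul, mul_zero, add_zero, zero_add, inv_one, one_mul] at h1 ⊢
    obtain ⟨hX, hα, hδ⟩ := h1
    simp [hX, hα, hδ]
end
end

section
/- Let Σ ⊆ ℂ be open, let f : Σ → su(2) be a smooth conformal immersion with conformal factor e^u and unit normal N, and suppose its mean curvature H = (1/8) e^{-2u} ⟨f_{xx} + f_{yy}, N⟩ is constant on Σ. Then the Hopf differential coefficient Q = ⟨N, f_{zz}⟩ is holomorphic on Σ, i.e. ∂_{z̄} Q = 0. -/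
open Matrix Complex

noncomputable section

attribute [local instance] Matrix.linftyOpNormedAddCommGroup Matrix.linftyOpNormedSpace
  Matrix.linftyOpNormedRing Matrix.linftyOpNormedAlgebra

set_option linter.unusedSectionVars false

section helpers

variable {V : Type*} [NormedAddCommGroup V] [NormedSpace ℝ V] [NormedSpace ℂ V]
  [IsScalarTower ℝ ℂ V]

/-- General Wirtinger-type operator. -/
def Wop (s : ℂ) (g : ℂ → V) (z : ℂ) : V :=
  (2:ℂ)⁻¹ • (fderiv ℝ g z 1 + s • fderiv ℝ g z Complex.I)

theorem Wop_congr {S : Set ℂ} (hS : IsOpen S) {s : ℂ} {g h : ℂ → V}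
    (H : ∀ z ∈ S, g z = h z) {z : ℂ} (hz : z ∈ S) : Wop s g z = Wop s h z := by
  have : g =ᶠ[nhds z] h := Filter.eventuallyEq_of_mem (hS.mem_nhds hz) H
  simp only [Wop, this.fderiv_eq]

theorem smooth_fderiv {S : Set ℂ} (hS : IsOpen S) {g : ℂ → V}
    (hg : ContDiffOn ℝ (⊤ : ℕ∞) g S) :
    ContDiffOn ℝ (⊤ : ℕ∞) (fderiv ℝ g) S :=
  hg.fderiv_of_isOpen hS (by simp)

theorem smooth_diff {S : Set ℂ} (hS : IsOpen S) {g : ℂ → V}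
    (hg : ContDiffOn ℝ (⊤ : ℕ∞) g S) {z : ℂ} (hz : z ∈ S) : DifferentiableAt ℝ g z :=
  (hg.contDiffAt (hS.mem_nhds hz)).differentiableAt (by simp)

theorem Wop_smooth {S : Set ℂ} (hS : IsOpen S) {g : ℂ → V} (s : ℂ)
    (hg : ContDiffOn ℝ (⊤ : ℕ∞) g S) : ContDiffOn ℝ (⊤ : ℕ∞) (Wop s g) S := by
  have h := smooth_fderiv hS hg
  unfold Wop
  exact ((h.clm_apply contDiffOn_const).add
    ((h.clm_apply contDiffOn_const).const_smul s)).const_smul _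

theorem fderiv_Wop {S : Set ℂ} (hS : IsOpen S) {g : ℂ → V} (s : ℂ)
    (hg : ContDiffOn ℝ (⊤ : ℕ∞) g S) {z : ℂ} (hz : z ∈ S) (v : ℂ) :
    fderiv ℝ (Wop s g) z v = (2:ℂ)⁻¹ • (fderiv ℝ (fderiv ℝ g) z v 1
      + s • fderiv ℝ (fderiv ℝ g) z v Complex.I) := by
  have h := (smooth_diff hS (smooth_fderiv hS hg) hz).hasFDerivAt
  have h1 := h.clm_apply (hasFDerivAt_const (1:ℂ) z)
  have h2 := h.clm_apply (hasFDerivAt_const Complex.I z)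
  have h3 := (h1.add (h2.const_smul s)).const_smul ((2:ℂ)⁻¹)
  have h4 : HasFDerivAt (Wop s g) _ z := h3
  rw [h4.fderiv]
  simp

theorem Wop_comm {S : Set ℂ} (hS : IsOpen S) {g : ℂ → V} (s t : ℂ)
    (hg : ContDiffOn ℝ (⊤ : ℕ∞) g S) {z : ℂ} (hz : z ∈ S) :
    Wop s (Wop t g) z = Wop t (Wop s g) z := by
  have hsym : IsSymmSndFDerivAt ℝ g z :=
    (hg.contDiffAt (hS.mem_nhds hz)).isSymmSndFDerivAt
      (by simpa using (WithTop.coe_le_coe.2 (le_top : (2 : ℕ∞) ≤ ⊤)))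
  have e := hsym.eq 1 Complex.I
  rw [Wop, Wop, fderiv_Wop hS t hg hz, fderiv_Wop hS t hg hz, fderiv_Wop hS s hg hz,
    fderiv_Wop hS s hg hz, e]
  module

theorem Wop_bilin (B : V →L[ℝ] V →L[ℝ] ℂ) (hB1 : ∀ (a : ℂ) X Y, B (a • X) Y = a * B X Y)
    (hB2 : ∀ (a : ℂ) X Y, B X (a • Y) = a * B X Y) (s : ℂ) {g h : ℂ → V} {z : ℂ}
    (hg : DifferentiableAt ℝ g z) (hh : DifferentiableAt ℝ h z) :
    Wop s (fun w => B (g w) (h w)) z = B (Wop s g z) (h z) + B (g z) (Wop s h z) := by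
  have := B.hasFDerivAt_of_bilinear hg.hasFDerivAt hh.hasFDerivAt
  rw [Wop, this.fderiv]
  simp [-smul_add, Wop, hB1, hB2]
  ring

theorem Wop_smulV (s : ℂ) {k : ℂ → ℂ} {h : ℂ → V} {z : ℂ} (hk : DifferentiableAt ℝ k z)
    (hh : DifferentiableAt ℝ h z) :
    Wop s (fun w => k w • h w) z = Wop s k z • h z + k z • Wop s h z := by
  have h2 := hk.hasFDerivAt.smul hh.hasFDerivAt
  have h3 : HasFDerivAt (fun w => k w • h w) _ z := h2
  rw [Wop, h3.fderiv]
  simp [Wop]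
  module

theorem Wop_lin {S : Set ℂ} (hS : IsOpen S) (s : ℂ) (T : V →L[ℝ] ℂ)
    (hT : ∀ (a : ℂ) X, T (a • X) = a * T X) {g : ℂ → V}
    (hg : ContDiffOn ℝ (⊤ : ℕ∞) g S) (ht : ∀ z ∈ S, T (g z) = 0) :
    ∀ z ∈ S, T (Wop s g z) = 0 := by
  intro z hz
  have h1 : HasFDerivAt (fun w => T (g w)) (T.comp (fderiv ℝ g z)) z :=
    T.hasFDerivAt.comp z (smooth_diff hS hg hz).hasFDerivAt
  have h2 : (fun w => T (g w)) =ᶠ[nhds z] fun _ => 0 :=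
    Filter.eventuallyEq_of_mem (hS.mem_nhds hz) ht
  have h3 : T.comp (fderiv ℝ g z) = 0 := by
    rw [← h1.fderiv, h2.fderiv_eq]; simp
  have h4 : ∀ v, T (fderiv ℝ g z v) = 0 := fun v => congrArg (fun L => L v) h3
  simp [-smul_add, Wop, h4, hT]

theorem dzV (g : ℂ → V) (z : ℂ) :
    (2:ℂ)⁻¹ • (fderiv ℝ g z 1 - Complex.I • fderiv ℝ g z Complex.I) = Wop (-Complex.I) g z := by
  simp [Wop, sub_eq_add_neg]

theorem pxV (g : ℂ → V) (z : ℂ) :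
    fderiv ℝ g z 1 = Wop (-Complex.I) g z + Wop Complex.I g z := by
  simp only [Wop]; module

theorem pyV (g : ℂ → V) (z : ℂ) :
    fderiv ℝ g z Complex.I = Complex.I • (Wop (-Complex.I) g z - Wop Complex.I g z) := by
  simp only [Wop]
  have : Complex.I • ((2:ℂ)⁻¹ • ((fderiv ℝ g z) 1 + -Complex.I • (fderiv ℝ g z) Complex.I) -
    (2:ℂ)⁻¹ • ((fderiv ℝ g z) 1 + Complex.I • (fderiv ℝ g z) Complex.I))
    = (-(Complex.I * Complex.I)) • (fderiv ℝ g z) Complex.I := by module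
  rw [this]; simp

theorem lapV {S : Set ℂ} (hS : IsOpen S) {f : ℂ → V}
    (hf : ContDiffOn ℝ (⊤ : ℕ∞) f S) {z : ℂ} (hz : z ∈ S) :
    fderiv ℝ (fun w => fderiv ℝ f w 1) z 1
      + fderiv ℝ (fun w => fderiv ℝ f w Complex.I) z Complex.I
      = (4:ℂ) • Wop Complex.I (Wop (-Complex.I) f) z := by
  have h := (smooth_diff hS (smooth_fderiv hS hf) hz).hasFDerivAt
  have h1 := h.clm_apply (hasFDerivAt_const (1:ℂ) z)
  have h2 := h.clm_apply (hasFDerivAt_const Complex.I z)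
  have hsym : IsSymmSndFDerivAt ℝ f z :=
    (hf.contDiffAt (hS.mem_nhds hz)).isSymmSndFDerivAt (by simpa using (WithTop.coe_le_coe.2 (le_top : (2 : ℕ∞) ≤ ⊤)))
  have e := hsym.eq 1 Complex.I
  rw [h1.fderiv, h2.fderiv, Wop, fderiv_Wop hS _ hf hz, fderiv_Wop hS _ hf hz, e]
  have h5 : ∀ a b c : V, (4:ℂ) • (2:ℂ)⁻¹ • ((2:ℂ)⁻¹ • (a + -Complex.I • b) +
      Complex.I • (2:ℂ)⁻¹ • (b + -Complex.I • c)) = a + (-(Complex.I * Complex.I)) • c := by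
    intro a b c; module
  rw [h5]; simp

end helpers

/-- ip as a bilinear map. -/
def ipB : M2 →L[ℝ] M2 →L[ℝ] ℂ :=
  (LinearMap.mk₂ ℝ ip
    (by intro a b c; simp [ip, add_mul, mul_add])
    (by intro a b c; simp [ip]; ring)
    (by intro a b c; simp [ip, mul_add])
    (by intro a b c; simp [ip]; ring)).toContinuousBilinearMap

theorem ipB_apply (X Y : M2) : ipB X Y = ip X Y := rfl

theorem ip_add_left (X Y Z : M2) : ip (X + Y) Z = ip X Z + ip Y Z := by
  simp [ip, add_mul, mul_add]
theorem ip_add_right (X Y Z : M2) : ip X (Y + Z) = ip X Y + ip X Z := by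
  simp [ip, mul_add]
theorem ip_smul_left (a : ℂ) (X Z : M2) : ip (a • X) Z = a * ip X Z := by
  simp [ip]; ring
theorem ip_smul_right (a : ℂ) (X Z : M2) : ip X (a • Z) = a * ip X Z := by
  simp [ip]; ring
theorem ip_comm (X Y : M2) : ip X Y = ip Y X := by
  simp only [ip, Matrix.trace_mul_comm X Y]

theorem Wop_ip (s : ℂ) {g h : ℂ → M2} {z : ℂ} (hg : DifferentiableAt ℝ g z)
    (hh : DifferentiableAt ℝ h z) :
    Wop s (fun w => ip (g w) (h w)) z = ip (Wop s g z) (h z) + ip (g z) (Wop s h z) := by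
  exact Wop_bilin ipB ip_smul_left ip_smul_right s hg hh

theorem Wop_smul (s : ℂ) {k : ℂ → ℂ} {h : ℂ → M2} {z : ℂ} (hk : DifferentiableAt ℝ k z)
    (hh : DifferentiableAt ℝ h z) :
    Wop s (fun w => k w • h w) z = Wop s k z • h z + k z • Wop s h z := by
  exact Wop_smulV s hk hh

/-- trace as a CLM. -/
def trL : M2 →L[ℝ] ℂ := (Matrix.traceLinearMap (Fin 2) ℝ ℂ).toContinuousLinearMap

theorem Wop_trace {S : Set ℂ} (hS : IsOpen S) (s : ℂ) {g : ℂ → M2}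
    (hg : ContDiffOn ℝ (⊤ : ℕ∞) g S) (ht : ∀ z ∈ S, (g z).trace = 0) :
    ∀ z ∈ S, (Wop s g z).trace = 0 := by
  exact Wop_lin hS s trL (fun a X => Matrix.trace_smul a X) hg ht

theorem ip_basis (X : M2) (hX : X.trace = 0) :
    X = ip X e1 • e1 + ip X e2 • e2 + ip X e3 • e3 := by
  have h : X 1 1 = - X 0 0 := by
    rw [Matrix.trace_fin_two] at hX; linear_combination hX
  ext i j
  fin_cases i <;> fin_cases j <;>
    simp [ip, e1, e2, e3, Matrix.trace_fin_two, Matrix.mul_apply, Fin.sum_univ_two, h] <;>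
    ring_nf <;> simp <;> ring

theorem ip_conj_s3 (A X Y : M2) (hA : IsUnit A.det) :
    ip (A * X * A⁻¹) (A * Y * A⁻¹) = ip X Y := by
  have : A * X * A⁻¹ * (A * Y * A⁻¹) = A * (X * Y) * A⁻¹ := by
    simp only [Matrix.mul_assoc, Matrix.nonsing_inv_mul_cancel_left _ _ hA]
  rw [ip, this, Matrix.trace_mul_comm, Matrix.nonsing_inv_mul_cancel_left _ _ hA, ip]

theorem conj_basis (A X : M2) (hA : IsUnit A.det) (hX : X.trace = 0) :
    X = ip X (A * e1 * A⁻¹) • (A * e1 * A⁻¹) + ip X (A * e2 * A⁻¹) • (A * e2 * A⁻¹)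
      + ip X (A * e3 * A⁻¹) • (A * e3 * A⁻¹) := by
  obtain ⟨Y, rfl⟩ : ∃ Y, X = A * Y * A⁻¹ := ⟨A⁻¹ * X * A, by
    simp only [Matrix.mul_assoc, Matrix.mul_nonsing_inv_cancel_left _ _ hA,
      Matrix.mul_nonsing_inv _ hA, Matrix.mul_one]⟩
  have hY : Y.trace = 0 := by
    rwa [Matrix.trace_mul_comm, Matrix.nonsing_inv_mul_cancel_left _ _ hA] at hX
  simp only [ip_conj_s3 _ _ _ hA]
  conv_lhs => rw [ip_basis Y hY]
  simp [Matrix.mul_add, Matrix.add_mul]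

theorem conj_e1e2 (A : M2) (hA : IsUnit A.det) :
    (A * e1 * A⁻¹) * (A * e2 * A⁻¹) = A * e3 * A⁻¹ := by
  have : e1 * e2 = e3 := by
    ext i j
    fin_cases i <;> fin_cases j <;> simp [e1, e2, e3]
  rw [← this]
  simp only [Matrix.mul_assoc, Matrix.nonsing_inv_mul_cancel_left _ _ hA]

theorem dz_eq (g : ℂ → M2) : dz g = Wop (-Complex.I) g := by
  funext z; exact dzV g z
theorem dzbC_eq (g : ℂ → ℂ) : dzbC g = Wop Complex.I g := by
  funext z; simp [dzbC, Wop, pxC, pyC]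

theorem px_eq (g : ℂ → M2) (z : ℂ) : px g z = Wop (-Complex.I) g z + Wop Complex.I g z := by
  exact pxV g z
theorem py_eq (g : ℂ → M2) (z : ℂ) :
    py g z = Complex.I • (Wop (-Complex.I) g z - Wop Complex.I g z) := by
  exact pyV g z

theorem Wop_zero_of {S : Set ℂ} (hS : IsOpen S) (s : ℂ) {k : ℂ → ℂ} {c : ℂ}
    (hk : ∀ z ∈ S, k z = c) {z : ℂ} (hz : z ∈ S) : Wop s k z = 0 := by
  rw [Wop_congr hS hk hz]; simp [Wop]

theorem lap_eq {S : Set ℂ} (hS : IsOpen S) {f : ℂ → M2}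
    (hf : ContDiffOn ℝ (⊤ : ℕ∞) f S) {z : ℂ} (hz : z ∈ S) :
    px (px f) z + py (py f) z = (4:ℂ) • Wop Complex.I (Wop (-Complex.I) f) z := by
  exact lapV hS hf hz

/-- for a conformal immersion with constant mean curvature, the Hopf
differential coefficient `Q = ⟨N, f_zz⟩` is holomorphic, i.e. `∂_z̄ Q = 0`. -/
theorem hopf_differential_holomorphic
    (S : Set ℂ) (hS : IsOpen S)
    (f : ℂ → M2) (u : ℂ → ℝ) (F : ℂ → M2)
    (hf : ContDiffOn ℝ (⊤ : ℕ∞) f S)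
    (hu : ContDiffOn ℝ (⊤ : ℕ∞) u S)
    (hF : ContDiffOn ℝ (⊤ : ℕ∞) F S)
    (hsu2 : ∀ z ∈ S, (f z)ᴴ = -(f z) ∧ (f z).trace = 0)
    (hconf : ∀ z ∈ S,
      ip (px f z) (px f z) = ((4 * Real.exp (2 * u z) : ℝ) : ℂ) ∧
      ip (py f z) (py f z) = ((4 * Real.exp (2 * u z) : ℝ) : ℂ) ∧
      ip (px f z) (py f z) = 0)
    (hFunit : ∀ z ∈ S, (F z)ᴴ * F z = 1 ∧ (F z).det = 1)
    (hFe1 : ∀ z ∈ S, F z * e1 * (F z)⁻¹ = (((2 * Real.exp (u z))⁻¹ : ℝ) : ℂ) • px f z)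
    (hFe2 : ∀ z ∈ S, F z * e2 * (F z)⁻¹ = (((2 * Real.exp (u z))⁻¹ : ℝ) : ℂ) • py f z)
    (N : ℂ → M2) (hN : ∀ z, N z = F z * e3 * (F z)⁻¹)
    (Q : ℂ → ℂ) (hQ : ∀ z, Q z = ip (N z) (dz (dz f) z))
    (H : ℂ → ℂ)
    (hH : ∀ z, H z = (((8 * Real.exp (2 * u z))⁻¹ : ℝ) : ℂ) *
      ip (px (px f) z + py (py f) z) (N z))
    (hHconst : ∃ c : ℂ, ∀ z ∈ S, H z = c) :
    ∀ z ∈ S, dzbC Q z = 0 := by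
  intro z₀ hz₀
  obtain ⟨c, hc⟩ := hHconst
  set p := Wop (-Complex.I) f with hp
  set q := Wop Complex.I f with hq
  set w := Wop Complex.I p with hw
  set E : ℂ → ℂ := fun z => ((4 * Real.exp (2 * u z) : ℝ) : ℂ) with hE
  have hpS := Wop_smooth hS (-Complex.I) hf
  have hqS := Wop_smooth hS Complex.I hf
  rw [← hp] at hpS
  rw [← hq] at hqS
  have hwS := Wop_smooth hS Complex.I hpS
  rw [← hw] at hwS
  have hE0 : ∀ z, E z ≠ 0 := fun z => by
    simp only [hE]; exact_mod_cast (by positivity : (4 * Real.exp (2 * u z) : ℝ) ≠ 0)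
  have hES : ContDiffOn ℝ (⊤ : ℕ∞) E S := by
    have h1 : ContDiffOn ℝ (⊤ : ℕ∞) (fun z => 4 * Real.exp (2 * u z)) S :=
      contDiffOn_const.mul ((contDiffOn_const.mul hu).exp)
    exact Complex.ofRealCLM.contDiff.comp_contDiffOn h1
  have hdet : ∀ z ∈ S, IsUnit (F z).det := fun z hz => by rw [(hFunit z hz).2]; exact isUnit_one
  have hI := Complex.I_mul_I
  set r : ℂ → ℂ := fun z => (((2 * Real.exp (u z))⁻¹ : ℝ) : ℂ) with hr
  have hrE : ∀ z, r z * r z * E z = 1 := fun z => by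
    simp only [hE, hr]
    norm_cast
    rw [two_mul (u z), Real.exp_add]
    have := Real.exp_pos (u z)
    field_simp
    norm_num
  -- basic relations
  have ipsub : ∀ X Y Z : M2, ip (X - Y) Z = ip X Z - ip Y Z := fun X Y Z => by
    simp [ip, sub_mul]; ring
  have ipsub' : ∀ X Y Z : M2, ip Z (X - Y) = ip Z X - ip Z Y := fun X Y Z => by
    simp [ip, mul_sub]
  have hconf' : ∀ z ∈ S, ip (p z) (p z) = 0 ∧ ip (q z) (q z) = 0 ∧ ip (p z) (q z) = E z / 2 := by
    intro z hz
    obtain ⟨h1, h2, h3⟩ := hconf z hz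
    rw [px_eq, ← hp, ← hq] at h1 h3
    rw [py_eq, ← hp, ← hq] at h2 h3
    simp only [ip_add_left, ip_add_right, ip_smul_left, ip_smul_right, ipsub, ipsub'] at h1 h2 h3
    have hc := ip_comm (q z) (p z)
    rw [hc] at h1 h2 h3
    change _ = E z at h1
    change _ = E z at h2
    have h2' : ip (p z) (p z) - 2 * ip (p z) (q z) + ip (q z) (q z) = -E z := by
      linear_combination -h2 + (ip (p z) (p z) - 2 * ip (p z) (q z) + ip (q z) (q z)) * hI
    have h3' : ip (p z) (p z) - ip (q z) (q z) = 0 := by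
      linear_combination -Complex.I * h3 + (ip (p z) (p z) - ip (q z) (q z)) * hI
    refine ⟨?_, ?_, ?_⟩
    · linear_combination (1/4) * h1 + (1/4) * h2' + (1/2) * h3'
    · linear_combination (1/4) * h1 + (1/4) * h2' - (1/2) * h3'
    · linear_combination (1/4) * h1 - (1/4) * h2'
  have e13 : ip e1 e3 = 0 := by simp [ip, e1, e3, Matrix.trace_fin_two]
  have e23 : ip e2 e3 = 0 := by simp [ip, e2, e3, Matrix.trace_fin_two]
  have e33 : ip e3 e3 = 1 := by simp [ip, e3, Matrix.trace_fin_two]; norm_num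
  have hr0 : ∀ z, r z ≠ 0 := fun z h => by have := hrE z; simp [h] at this
  have hN1 : ∀ z ∈ S, ip (N z) (p z) = 0 ∧ ip (N z) (q z) = 0 ∧ ip (N z) (N z) = 1 := by
    intro z hz
    have h1 : ip (N z) (px f z) = 0 := by
      have := ip_conj_s3 (F z) e1 e3 (hdet z hz)
      rw [hFe1 z hz, ← hN, e13, ip_smul_left, ip_comm] at this
      exact (mul_eq_zero.1 this).resolve_left (hr0 z)
    have h2 : ip (N z) (py f z) = 0 := by
      have := ip_conj_s3 (F z) e2 e3 (hdet z hz)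
      rw [hFe2 z hz, ← hN, e23, ip_smul_left, ip_comm] at this
      exact (mul_eq_zero.1 this).resolve_left (hr0 z)
    have h3 : ip (N z) (N z) = 1 := by
      rw [hN, ip_conj_s3 _ _ _ (hdet z hz), e33]
    rw [px_eq, ← hp, ← hq] at h1
    rw [py_eq, ← hp, ← hq] at h2
    simp only [ip_add_right, ip_smul_right, ipsub'] at h1 h2
    have h2' := (mul_eq_zero.1 h2).resolve_left Complex.I_ne_zero
    exact ⟨by linear_combination (1/2) * h1 + (1/2) * h2',
      by linear_combination (1/2) * h1 - (1/2) * h2', h3⟩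
  have hexp : ∀ z ∈ S, ∀ X : M2, X.trace = 0 → (E z / 2) • X =
      ip X (q z) • p z + ip X (p z) • q z + (E z / 2 * ip X (N z)) • N z := by
    intro z hz X hX
    have h := conj_basis (F z) X (hdet z hz) hX
    rw [hFe1 z hz, hFe2 z hz, ← hN] at h
    change X = ip X (r z • _) • r z • _ + ip X (r z • _) • r z • _ + _ at h
    rw [px_eq, py_eq, ← hp, ← hq] at h
    simp only [ip_add_right, ip_smul_right, ipsub'] at h
    conv_lhs => rw [h]
    have hrE' := hrE z
    generalize ip X (p z) = a, ip X (q z) = b, ip X (N z) = d at *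
    have : (E z / 2) • ((r z * (a + b)) • r z • (p z + q z) +
        (r z * (Complex.I * (a - b))) • r z • Complex.I • (p z - q z) + d • N z)
        = ((r z * r z * E z) * (a + b) / 2 + (r z * r z * E z) * (Complex.I * Complex.I) * (a - b) / 2) • p z
        + ((r z * r z * E z) * (a + b) / 2 - (r z * r z * E z) * (Complex.I * Complex.I) * (a - b) / 2) • q z
        + (E z / 2 * d) • N z := by module
    rw [this, hrE', hI]
    module
  have hNS : ContDiffOn ℝ (⊤ : ℕ∞) N S := by
    have hpx : ContDiffOn ℝ (⊤ : ℕ∞) (px f) S := (smooth_fderiv hS hf).clm_apply contDiffOn_const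
    have hpy : ContDiffOn ℝ (⊤ : ℕ∞) (py f) S := (smooth_fderiv hS hf).clm_apply contDiffOn_const
    have h1 : ContDiffOn ℝ (⊤ : ℕ∞) (fun z => (E z)⁻¹ • (px f z * py f z)) S :=
      (hES.inv (fun z _ => hE0 z)).smul (hpx.mul hpy)
    refine h1.congr fun z hz => ?_
    rw [hN, ← conj_e1e2 _ (hdet z hz), hFe1 z hz, hFe2 z hz]
    change (r z • _) * (r z • _) = _
    rw [smul_mul_smul_comm, eq_inv_of_mul_eq_one_left (hrE z)]
  have dp := fun {z} hz => smooth_diff (z := z) hS hpS hz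
  have dq := fun {z} hz => smooth_diff (z := z) hS hqS hz
  have dN := fun {z} hz => smooth_diff (z := z) hS hNS hz
  have dE := fun {z} hz => smooth_diff (z := z) hS hES hz
  have htp := Wop_trace hS (-Complex.I) hf (fun z hz => (hsu2 z hz).2)
  have htw := Wop_trace hS Complex.I hpS htp
  have htpz := Wop_trace hS (-Complex.I) hpS htp
  have hwq : ∀ z ∈ S, Wop (-Complex.I) q z = w z := fun z hz =>
    Wop_comm hS _ _ hf hz
  -- w = (c E / 2) N
  have hpw : ∀ z ∈ S, ip (p z) (w z) = 0 := by
    intro z hz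
    have := Wop_zero_of hS Complex.I (fun z hz => (hconf' z hz).1) hz
    rw [Wop_ip _ (dp hz) (dp hz), ← hw, ip_comm (w z)] at this
    linear_combination (1/2) * this
  have hqw : ∀ z ∈ S, ip (q z) (w z) = 0 := by
    intro z hz
    have := Wop_zero_of hS (-Complex.I) (fun z hz => (hconf' z hz).2.1) hz
    rw [Wop_ip _ (dq hz) (dq hz), hwq z hz, ip_comm (w z)] at this
    linear_combination (1/2) * this
  have hNw : ∀ z ∈ S, ip (w z) (N z) = c / 2 * E z := by
    intro z hz
    have h := hc z hz
    rw [hH, lap_eq hS hf hz, ← hp, ← hw, ip_smul_left] at h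
    have h8 : (((8 * Real.exp (2 * u z))⁻¹ : ℝ) : ℂ) * (2 * E z) = 1 := by
      simp only [hE]; norm_cast
      have := Real.exp_pos (2 * u z)
      field_simp
      norm_num
    linear_combination (E z / 2) * h - ip (w z) (N z) * h8
  have hwN : ∀ z ∈ S, w z = (c / 2 * E z) • N z := by
    intro z hz
    have h := hexp z hz (w z) (htw z hz)
    rw [ip_comm _ (q z), ip_comm _ (p z), hpw z hz, hqw z hz, hNw z hz] at h
    have h0 : E z / 2 ≠ 0 := div_ne_zero (hE0 z) two_ne_zero
    apply smul_right_injective M2 h0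
    simp only [h]
    module
  -- now at z₀
  have hQ' : Q = fun z => ip (N z) (Wop (-Complex.I) p z) := by
    funext z; rw [hQ, dz_eq, dz_eq]
  have dpz := smooth_diff hS (Wop_smooth hS (-Complex.I) hpS) hz₀
  rw [dzbC_eq, hQ', Wop_ip _ (dN hz₀) dpz, Wop_comm hS _ _ hpS hz₀, ← hw,
    Wop_congr hS hwN hz₀, Wop_smul _ ((dE hz₀).const_mul _) (dN hz₀)]
  have hcE : Wop (-Complex.I) (fun z => c / 2 * E z) z₀ = c / 2 * Wop (-Complex.I) E z₀ := by
    have h : HasFDerivAt (fun z => c / 2 * E z) _ z₀ := (dE hz₀).hasFDerivAt.const_mul (c / 2)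
    simp only [Wop, h.fderiv]
    simp
    ring
  have hNN : ∀ s, ip (N z₀) (Wop s N z₀) = 0 := by
    intro s
    have := Wop_zero_of hS s (fun z hz => (hN1 z hz).2.2) hz₀
    rw [Wop_ip _ (dN hz₀) (dN hz₀), ip_comm (Wop s N z₀)] at this
    linear_combination (1/2) * this
  have a1 : ip (Wop Complex.I N z₀) (p z₀) = - (c / 2 * E z₀) := by
    have := Wop_zero_of hS Complex.I (fun z hz => (hN1 z hz).1) hz₀
    rw [Wop_ip _ (dN hz₀) (dp hz₀), ← hw, ip_comm (N z₀), hNw _ hz₀] at this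
    linear_combination this
  have a2 : ip (Wop (-Complex.I) p z₀) (p z₀) = 0 := by
    have := Wop_zero_of hS (-Complex.I) (fun z hz => (hconf' z hz).1) hz₀
    rw [Wop_ip _ (dp hz₀) (dp hz₀), ip_comm (p z₀)] at this
    linear_combination (1/2) * this
  have a3 : ip (Wop (-Complex.I) p z₀) (q z₀) = Wop (-Complex.I) E z₀ / 2 := by
    have := Wop_congr (s := -Complex.I) hS (fun z hz => (hconf' z hz).2.2) hz₀
    rw [Wop_ip _ (dp hz₀) (dq hz₀), hwq _ hz₀, hpw _ hz₀, add_zero] at this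
    rw [this]
    have h : HasFDerivAt (fun z => E z / 2) _ z₀ := (dE hz₀).hasFDerivAt.mul_const ((2:ℂ)⁻¹)
    simp only [Wop, h.fderiv]
    simp
    ring
  have h := congrArg (fun X => ip (Wop Complex.I N z₀) X) (hexp z₀ hz₀ _ (htpz z₀ hz₀))
  simp only [ip_add_right, ip_smul_right] at h
  rw [a1, a2, a3, ip_comm (Wop Complex.I N z₀) (N z₀), hNN] at h
  rw [ip_add_right, ip_smul_right, ip_smul_right, hNN, hcE, (hN1 z₀ hz₀).2.2]
  have h0 : E z₀ / 2 ≠ 0 := div_ne_zero (hE0 z₀) two_ne_zero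
  apply mul_left_cancel₀ h0
  linear_combination h
end
end
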